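/- Main comparison theorem: Let T be a rooted tree with no infinite geodesic, no vertex with exactly one successor, and nonempty boundary ∂T; let ℓ be a length function, and let P, Q be fully supported probability measures on ∂T with ℓ(P), ℓ(Q), ℓ_♯(P) < ∞, with finite entropies H(P), H(Q), and with D(P‖Q) absolutely convergent. Assume the local entropy series of p and q are uniformly summable: for every ε > 0 there is M_ε ∈ ℕ such that every interior x admits N_ε(x) ⊆ N(x) with |N_ε(x)| ≤ M_ε, ∑_{y ∈ N(x)\N_ε(x)} φ(p(y|x)) < ε and ∑_{y ∈ N(x)\N_ε(x)} φ(q(y|x)) < ε. Let A = sup{H_q(x)/ℓ(x) : x interior} (assumed finite) and a = inf{H_q(x)/ℓ(x) : x interior}. Then for every ε > 0 (with witness M_ε) and every δ with 0 < δ < 1/2, |H(P)/ℓ(P) − H(Q)/ℓ(Q)| ≤ L·(2ε + M_ε·φ(δ)) + (C·√L/δ)·√(D(P‖Q)/ℓ(P)) + ((A−a)/2)·‖μ_P − μ_Q‖₁, where L = ℓ_♯(P)/ℓ(P), C = 2√2/(e·√(ln 2)), and ‖μ_P − μ_Q‖₁ = ∑_{x interior} |μ_P(x) − μ_Q(x)|.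 -/

import Mathlib

open scoped BigOperators
open Filter

noncomputable section

/-- The entropy function `φ(t) = t·log₂(1/t)` (which vanishes at `t = 0`). -/
def phi (t : ℝ) : ℝ := t * Real.logb 2 (1 / t)

/-- A rooted tree: a set of finite lists over ℕ containing the empty list (the root)
and closed under taking prefixes. -/
def IsTree (T : Set (List ℕ)) : Prop :=
  ([] : List ℕ) ∈ T ∧ ∀ x ∈ T, ∀ y : List ℕ, y <+: x → y ∈ T

/-- The successors of `x` in `T`: one-entry extensions of `x` lying in `T`. -/
def succs (T : Set (List ℕ)) (x : List ℕ) : Set (List ℕ) :=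
  {y | y ∈ T ∧ ∃ n : ℕ, y = x ++ [n]}

/-- `x` is a leaf of `T`. -/
def IsLeaf (T : Set (List ℕ)) (x : List ℕ) : Prop :=
  x ∈ T ∧ succs T x = ∅

/-- The boundary of `T`: its set of leaves. -/
def bdry (T : Set (List ℕ)) : Set (List ℕ) := {x | IsLeaf T x}

/-- The interior of `T`. -/
def intr (T : Set (List ℕ)) : Set (List ℕ) := T \ bdry T

/-- No vertex has exactly one successor. -/
def NoUnary (T : Set (List ℕ)) : Prop :=
  ∀ x ∈ T, ∀ y : List ℕ, succs T x ≠ {y}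

/-- `T` has no infinite geodesic. -/
def NoInfGeo (T : Set (List ℕ)) : Prop :=
  ¬ ∃ ξ : ℕ → ℕ, ∀ n : ℕ, (List.ofFn fun i : Fin n => ξ i) ∈ T

/-- `∂T_x`: the set of leaves having `x` as a prefix. -/
def cone (T : Set (List ℕ)) (x : List ℕ) : Set (List ℕ) :=
  {v | v ∈ bdry T ∧ x <+: v}

/-- `P(∂T_x)`. -/
def mass (T : Set (List ℕ)) (P : List ℕ → ℝ) (x : List ℕ) : ℝ :=
  ∑' v : cone T x, P v

/-- `|x|_ℓ`: the sum of `ℓ(y)` over the proper prefixes `y` of `x`. -/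
def lenWt (ℓ : List ℕ → ℝ) (x : List ℕ) : ℝ :=
  ∑ i ∈ Finset.range x.length, ℓ (x.take i)

/-- Expected length `ℓ(P)`. -/
def expLen (T : Set (List ℕ)) (ℓ P : List ℕ → ℝ) : ℝ :=
  ∑' v : bdry T, lenWt ℓ v * P v

/-- Forward transition probability `p(y|x) = P(∂T_y)/P(∂T_x)`. -/
def fwd (T : Set (List ℕ)) (P : List ℕ → ℝ) (x y : List ℕ) : ℝ :=
  mass T P y / mass T P x

/-- Node-average measure `μ_P(x) = ℓ(x)·P(∂T_x)/ℓ(P)`. -/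
def nodeAvg (T : Set (List ℕ)) (ℓ P : List ℕ → ℝ) (x : List ℕ) : ℝ :=
  ℓ x * mass T P x / expLen T ℓ P

/-- A (fully supported) probability measure on a set `S` of vertices. -/
def IsProbOn (S : Set (List ℕ)) (P : List ℕ → ℝ) : Prop :=
  (∀ v ∈ S, 0 < P v) ∧ HasSum (fun v : S => P v) 1

/-- The local entropy `H_q(x) = ∑_{y∈N(x)} φ(q(y|x))`. -/
def Hloc (T : Set (List ℕ)) (Q : List ℕ → ℝ) (x : List ℕ) : ℝ :=
  ∑' y : succs T x, phi (fwd T Q x y)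

/-!
The entropy, the relative entropy and the length are all expectations of sums along the path from
the root to a random leaf. Exchanging the order of summation turns them into sums over the
vertices or edges of `T`: in particular `H(P) = ∑_x P(∂T_x)·H_p(x)` over the interior. One compares
`H(P)` with `H(Q)` through the mixed quantity `∑_x P(∂T_x)·H_q(x)`.

Between `H(P)` and the mixed quantity only the local entropies change, and `φ` satisfies
`|φ(s) − φ(t)| ≤ φ(δ) + 2/(e·ln 2·δ)·|s − t|` on `[0, 1]`. The distances `|p(y|x) − q(y|x)|`,
weighted by `P(∂T_x)`, sum to the `ℓ¹` distance of two flows on the edges, both of total mass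
`ℓ_♯(P)`, whose relative entropy is `D(P‖Q)` by the chain rule; Pinsker's inequality bounds it.

After division by the lengths, the mixed quantity and `H(Q)` are the averages of `H_q/ℓ` for `μ_P`
and `μ_Q`, and these averages differ by at most half the oscillation `A − a` times `‖μ_P − μ_Q‖₁`.
-/

section Analysis

open Real InformationTheory

theorem negMulLog_add_le {s t : ℝ} (hs : 0 ≤ s) (ht : 0 ≤ t) :
    negMulLog (s + t) ≤ negMulLog s + negMulLog t := by
  rcases hs.eq_or_lt with rfl | hs
  · simp
  rcases ht.eq_or_lt with rfl | ht
  · simp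
  have hlog_s : log s ≤ log (s + t) := log_le_log hs (by linarith)
  have hlog_t : log t ≤ log (s + t) := log_le_log ht (by linarith)
  simp only [negMulLog]
  nlinarith

theorem negMulLog_sub_negMulLog_le {s t : ℝ} (hs : 0 ≤ s) (hst : s ≤ t) (ht : t ≤ 1) :
    negMulLog s - negMulLog t ≤ t - s := by
  rcases hs.eq_or_lt with rfl | hs
  · have := negMulLog_nonneg hst ht
    simp only [negMulLog_zero]
    linarith
  have ht_pos : 0 < t := hs.trans_le hst
  have hlog_ratio : s * (log t - log s) ≤ t - s := by
    rw [← log_div ht_pos.ne' hs.ne']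
    calc s * log (t / s) ≤ s * (t / s - 1) := by
          gcongr
          exact log_le_sub_one_of_pos (by positivity)
      _ = t - s := by field_simp
  have hlog_t : (t - s) * log t ≤ 0 :=
    mul_nonpos_of_nonneg_of_nonpos (by linarith) (log_nonpos ht_pos.le ht)
  simp only [negMulLog]
  linarith

theorem negMulLog_le_inv_exp_one {t : ℝ} (ht : 0 ≤ t) : negMulLog t ≤ (exp 1)⁻¹ := by
  have h := negMulLog_le_one_sub_self (x := exp 1 * t) (by positivity)
  rw [negMulLog_mul, negMulLog, log_exp] at h
  rw [← one_div, le_div_iff₀' (exp_pos 1)]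
  linarith

theorem monotoneOn_negMulLog : MonotoneOn negMulLog (Set.Icc 0 (exp (-1))) := by
  refine monotoneOn_of_deriv_nonneg (convex_Icc _ _) continuous_negMulLog.continuousOn
    (fun x hx => ?_) fun x hx => ?_
  all_goals rw [interior_Icc] at hx
  · exact (hasDerivAt_negMulLog hx.1.ne').differentiableAt.differentiableWithinAt
  · rw [deriv_negMulLog hx.1.ne']
    have := (log_lt_iff_lt_exp hx.1).2 hx.2
    linarith

theorem negMulLog_le_of_le_half {u δ : ℝ} (hu : 0 ≤ u) (huδ : u ≤ δ / 2) (hδ₀ : 0 < δ)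
    (hδ : δ ≤ 1 / 2) : negMulLog u ≤ negMulLog δ := by
  have hδ_le_exp : δ / 2 ≤ exp (-1) := by
    linarith [exp_neg_one_gt_d9]
  have hδ_log : δ * log 2 ≤ negMulLog δ := by
    have hlog : log δ ≤ -log 2 := by
      simpa only [one_div, log_inv] using log_le_log hδ₀ hδ
    rw [negMulLog, neg_mul, ← mul_neg]
    gcongr
    linarith
  calc negMulLog u ≤ negMulLog (δ / 2) :=
        monotoneOn_negMulLog ⟨hu, huδ.trans hδ_le_exp⟩ ⟨hu.trans huδ, hδ_le_exp⟩ huδ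
    _ = negMulLog δ / 2 + δ * log 2 / 2 := by
        rw [div_eq_mul_inv, negMulLog_mul]
        simp only [negMulLog, log_inv]
        ring
    _ ≤ negMulLog δ := by linarith

theorem negMulLog_le_negMulLog_add_mul {u δ : ℝ} (hu : 0 ≤ u) (hδ₀ : 0 < δ) (hδ : δ ≤ 1 / 2) :
    negMulLog u ≤ negMulLog δ + 2 / (exp 1 * δ) * u := by
  -- Beyond `δ / 2` the slope `2 / (e δ)` makes the linear term exceed the maximal value `1 / e`.
  rcases le_total u (δ / 2) with h | h
  · have hlinear : 0 ≤ 2 / (exp 1 * δ) * u := by positivity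
    linarith [negMulLog_le_of_le_half hu h hδ₀ hδ]
  · have hlinear : (exp 1)⁻¹ ≤ 2 / (exp 1 * δ) * u :=
      calc (exp 1)⁻¹ = 2 / (exp 1 * δ) * (δ / 2) := by field_simp
        _ ≤ 2 / (exp 1 * δ) * u := by gcongr
    linarith [negMulLog_le_inv_exp_one hu, negMulLog_nonneg hδ₀.le (by linarith)]

theorem abs_negMulLog_sub_le_of_le {s t δ : ℝ} (hs : 0 ≤ s) (hst : s ≤ t) (ht : t ≤ 1)
    (hδ₀ : 0 < δ) (hδ : δ ≤ 1 / 2) :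
    |negMulLog s - negMulLog t| ≤ negMulLog δ + 2 / (exp 1 * δ) * (t - s) := by
  have hslope : 1 ≤ 2 / (exp 1 * δ) := by
    rw [one_le_div (by positivity)]
    nlinarith [exp_one_lt_d9]
  rw [abs_le]
  constructor
  · have hsub := negMulLog_add_le hs (sub_nonneg.2 hst)
    rw [add_sub_cancel] at hsub
    linarith [negMulLog_le_negMulLog_add_mul (sub_nonneg.2 hst) hδ₀ hδ]
  · linarith [negMulLog_sub_negMulLog_le hs hst ht, negMulLog_nonneg hδ₀.le (by linarith),
      le_mul_of_one_le_left (sub_nonneg.2 hst) hslope]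

theorem phi_eq_negMulLog_div (t : ℝ) : phi t = negMulLog t / log 2 := by
  simp only [phi, logb, negMulLog, one_div, log_inv]
  ring

theorem phi_nonneg {t : ℝ} (ht : t ∈ Set.Icc 0 1) : 0 ≤ phi t := by
  rw [phi_eq_negMulLog_div]
  exact div_nonneg (negMulLog_nonneg ht.1 ht.2) (log_nonneg one_le_two)

theorem phi_eq_mul_neg_logb (t : ℝ) : phi t = t * -logb 2 t := by
  rw [phi, one_div, logb_inv]

theorem abs_phi_sub_phi_le {s t δ : ℝ} (hs : s ∈ Set.Icc 0 1) (ht : t ∈ Set.Icc 0 1)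
    (hδ₀ : 0 < δ) (hδ : δ ≤ 1 / 2) :
    |phi s - phi t| ≤ phi δ + 2 / (exp 1 * log 2 * δ) * |s - t| := by
  wlog hst : s ≤ t generalizing s t
  · rw [abs_sub_comm, abs_sub_comm s]
    exact this ht hs (le_of_not_ge hst)
  have hlog2 : 0 < log 2 := log_pos one_lt_two
  simp only [phi_eq_negMulLog_div]
  rw [← sub_div, abs_div, abs_of_pos hlog2, div_le_iff₀ hlog2, abs_sub_comm s,
    abs_of_nonneg (sub_nonneg.2 hst)]
  calc |negMulLog s - negMulLog t| ≤ negMulLog δ + 2 / (exp 1 * δ) * (t - s) :=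
        abs_negMulLog_sub_le_of_le hs.1 hst ht.2 hδ₀ hδ
    _ = (negMulLog δ / log 2 + 2 / (exp 1 * log 2 * δ) * (t - s)) * log 2 := by field_simp

theorem hasDerivAt_mul_klFun_sub_sq {t : ℝ} (ht : 0 < t) :
    HasDerivAt (fun t => (2 * t + 4) * klFun t - 3 * (t - 1) ^ 2)
      (2 * klFun t + (2 * t + 4) * log t - 6 * (t - 1)) t := by
  have hlin := ((hasDerivAt_id t).const_mul 2).add_const 4
  have hsq := (((hasDerivAt_id t).sub_const 1).pow 2).const_mul 3
  refine ((hlin.mul (hasDerivAt_klFun ht.ne')).sub hsq).congr_deriv ?_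
  simp only [mul_one, id_eq, Nat.cast_ofNat, Nat.add_one_sub_one, pow_one]
  ring

theorem convexOn_mul_klFun_sub_sq :
    ConvexOn ℝ (Set.Ici 0) fun t => (2 * t + 4) * klFun t - 3 * (t - 1) ^ 2 := by
  refine convexOn_of_hasDerivWithinAt2_nonneg
    (f' := fun t => 2 * klFun t + (2 * t + 4) * log t - 6 * (t - 1))
    (f'' := fun t => 4 * (log t - (1 - t⁻¹))) (convex_Ici 0) ?_ (fun t ht => ?_) (fun t ht => ?_)
    fun t ht => ?_
  · have := continuous_klFun
    fun_prop
  all_goals rw [interior_Ici] at ht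
  · exact (hasDerivAt_mul_klFun_sub_sq ht).hasDerivWithinAt
  · have ht₀ : t ≠ 0 := ht.ne'
    have hlin := ((hasDerivAt_id t).const_mul 2).add_const 4
    refine (((((hasDerivAt_klFun ht₀).const_mul 2).add (hlin.mul (hasDerivAt_log ht₀))).sub
      (((hasDerivAt_id t).sub_const 1).const_mul 6)).congr_deriv ?_).hasDerivWithinAt
    simp only [mul_one, id_eq]
    field_simp
    ring
  · have := one_sub_inv_le_log_of_pos ht
    linarith

-- The pointwise form of Pinsker's inequality: the difference of the two sides is convex in `t`
-- and has slope zero at `1`, where it vanishes.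
theorem three_mul_sub_one_sq_le_mul_klFun {t : ℝ} (ht : 0 ≤ t) :
    3 * (t - 1) ^ 2 ≤ (2 * t + 4) * klFun t := by
  have hmin : IsMinOn (fun t => (2 * t + 4) * klFun t - 3 * (t - 1) ^ 2) (Set.Ici 0) 1 := by
    refine convexOn_mul_klFun_sub_sq.isMinOn_of_rightDeriv_eq_zero (by simp) ?_
    rw [(hasDerivAt_mul_klFun_sub_sq one_pos).hasDerivWithinAt.derivWithin
      (uniqueDiffWithinAt_Ioi 1)]
    simp only [klFun_one, log_one, mul_zero, add_zero, sub_self]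
  have hle := isMinOn_iff.1 hmin t ht
  simp only [klFun_one] at hle
  linarith

end Analysis

section Sums

open InformationTheory Real

theorem hasSum_comm_of_nonneg {ι κ : Type*} {F : ι → κ → ℝ} {r : ι → ℝ} {c : κ → ℝ} {s : ℝ}
    (hF : ∀ i j, 0 ≤ F i j) (hrow : ∀ i, HasSum (F i) (r i)) (hr : HasSum r s)
    (hcol : ∀ j, HasSum (F · j) (c j)) : HasSum c s := by
  have hsummable : Summable (Function.uncurry F) := by
    refine (summable_prod_of_nonneg fun z => hF z.1 z.2).2 ⟨fun i => (hrow i).summable, ?_⟩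
    simpa only [Function.uncurry_apply_pair, (hrow _).tsum_eq] using hr.summable
  have hswap : HasSum (fun z : κ × ι => F z.2 z.1) (∑' z, Function.uncurry F z) :=
    (Equiv.prodComm κ ι).hasSum_iff.2 hsummable.hasSum
  rw [hr.unique (hsummable.hasSum.prod_fiberwise hrow)]
  exact hswap.prod_fiberwise hcol

theorem hasSum_sigma_of_nonneg {ι : Type*} {κ : ι → Type*} {f : (Σ i, κ i) → ℝ} {g : ι → ℝ}
    {s : ℝ} (hf : ∀ z, 0 ≤ f z) (hfiber : ∀ i, HasSum (fun j => f ⟨i, j⟩) (g i))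
    (hg : HasSum g s) : HasSum f s := by
  refine hg.sigma_of_hasSum hfiber ((summable_sigma_of_nonneg hf).2
    ⟨fun i => (hfiber i).summable, ?_⟩)
  simpa only [(hfiber _).tsum_eq] using hg.summable

theorem abs_sub_le_osc_mul_tsum_abs_sub {ι : Type*} {μ ν r : ι → ℝ} {c a A R R' : ℝ}
    (hμ : HasSum μ c) (hν : HasSum ν c) (hr : ∀ i, r i ∈ Set.Icc a A)
    (hμr : HasSum (fun i => μ i * r i) R) (hνr : HasSum (fun i => ν i * r i) R') :
    |R - R'| ≤ (A - a) / 2 * ∑' i, |μ i - ν i| := by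
  -- `μ` and `ν` have the same total, so `r` may be recentred at the midpoint of `[a, A]`.
  have hcentred : HasSum (fun i => (μ i - ν i) * (r i - (A + a) / 2)) (R - R') := by
    have h := (hμr.sub hνr).sub ((hμ.sub hν).mul_right ((A + a) / 2))
    rw [sub_self, zero_mul, sub_zero] at h
    refine h.congr_fun fun i => ?_
    ring
  refine hcentred.norm_le_of_bounded
    ((hμ.summable.sub hν.summable).abs.hasSum.mul_left _) fun i => ?_
  have hmid : |r i - (A + a) / 2| ≤ (A - a) / 2 := by
    rw [abs_le]
    constructor <;> linarith [(hr i).1, (hr i).2]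
  rw [norm_mul, mul_comm]
  exact mul_le_mul_of_nonneg_right hmid (norm_nonneg _)

theorem tsum_subtype_eq_sum_add_tsum_diff {α E : Type*} [AddCommMonoid E] [TopologicalSpace E]
    [ContinuousAdd E] [T2Space E] {S : Set α} {F : Finset α} {f : α → E} (hF : ↑F ⊆ S)
    (hf : Summable fun y : {y // y ∈ S ∧ y ∉ F} => f y) :
    ∑' y : S, f y = ∑ y ∈ F, f y + ∑' y : {y // y ∈ S ∧ y ∉ F}, f y := by
  rw [← Finset.tsum_subtype' F f]
  conv_lhs => rw [← Set.union_sdiff_cancel hF]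
  exact Summable.tsum_union_disjoint Set.disjoint_sdiff_right (F.summable f) hf

theorem abs_sum_phi_sub_sum_phi_le {α : Type*} {F : Finset α} {p q : α → ℝ} {δ : ℝ}
    (hp : ∀ y ∈ F, p y ∈ Set.Icc 0 1) (hq : ∀ y ∈ F, q y ∈ Set.Icc 0 1) (hδ₀ : 0 < δ)
    (hδ : δ ≤ 1 / 2) :
    |∑ y ∈ F, phi (p y) - ∑ y ∈ F, phi (q y)| ≤
      F.card * phi δ + 2 / (exp 1 * log 2 * δ) * ∑ y ∈ F, |p y - q y| := by
  rw [← Finset.sum_sub_distrib, Finset.mul_sum, ← nsmul_eq_mul, ← Finset.sum_const,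
    ← Finset.sum_add_distrib]
  exact (Finset.abs_sum_le_sum_abs _ _).trans <| Finset.sum_le_sum fun y hy =>
    abs_phi_sub_phi_le (hp y hy) (hq y hy) hδ₀ hδ

theorem abs_tsum_phi_sub_tsum_phi_le {α : Type*} {S : Set α} {F : Finset α} {p q : α → ℝ}
    {ε δ : ℝ} (hF : ↑F ⊆ S) (hp : ∀ y ∈ S, p y ∈ Set.Icc 0 1) (hq : ∀ y ∈ S, q y ∈ Set.Icc 0 1)
    (hpq : Summable fun y : S => |p y - q y|)
    (hp_summable : Summable fun y : {y // y ∈ S ∧ y ∉ F} => phi (p y))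
    (hp_tail : ∑' y : {y // y ∈ S ∧ y ∉ F}, phi (p y) < ε)
    (hq_summable : Summable fun y : {y // y ∈ S ∧ y ∉ F} => phi (q y))
    (hq_tail : ∑' y : {y // y ∈ S ∧ y ∉ F}, phi (q y) < ε) (hδ₀ : 0 < δ) (hδ : δ ≤ 1 / 2) :
    |∑' y : S, phi (p y) - ∑' y : S, phi (q y)| ≤
      2 * ε + F.card * phi δ
        + 2 / (exp 1 * log 2 * δ) * ∑' y : S, |p y - q y| := by
  have hfinite := abs_sum_phi_sub_sum_phi_le (fun y hy => hp y (hF hy)) (fun y hy => hq y (hF hy))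
    hδ₀ hδ
  have hsum_le : ∑ y ∈ F, |p y - q y| ≤ ∑' y : S, |p y - q y| := by
    rw [← Finset.tsum_subtype' F fun y => |p y - q y|]
    exact (F.summable fun y => |p y - q y|).tsum_le_tsum_of_inj (Set.inclusion hF)
      (Set.inclusion_injective hF) (fun _ _ => abs_nonneg _) (fun _ => le_rfl) hpq
  have hscaled := mul_le_mul_of_nonneg_left hsum_le
    (by positivity : 0 ≤ 2 / (exp 1 * log 2 * δ))
  have hp_nonneg : 0 ≤ ∑' y : {y // y ∈ S ∧ y ∉ F}, phi (p y) :=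
    tsum_nonneg fun y => phi_nonneg (hp y y.2.1)
  have hq_nonneg : 0 ≤ ∑' y : {y // y ∈ S ∧ y ∉ F}, phi (q y) :=
    tsum_nonneg fun y => phi_nonneg (hq y y.2.1)
  rw [tsum_subtype_eq_sum_add_tsum_diff (f := fun y => phi (p y)) hF hp_summable,
    tsum_subtype_eq_sum_add_tsum_diff (f := fun y => phi (q y)) hF hq_summable]
  rw [abs_le] at hfinite ⊢
  constructor <;> linarith [hfinite.1, hfinite.2]

theorem abs_sub_le_sqrt_mul_sqrt_klFun {p q : ℝ} (hp : 0 ≤ p) (hq : 0 < q) :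
    |p - q| ≤ √((2 * p + 4 * q) / 3) * √(q * klFun (p / q)) := by
  rw [← sqrt_mul (by positivity)]
  refine abs_le_sqrt ?_
  have h := three_mul_sub_one_sq_le_mul_klFun (div_nonneg hp hq.le)
  calc (p - q) ^ 2 = q ^ 2 * (3 * (p / q - 1) ^ 2) / 3 := by field_simp
    _ ≤ q ^ 2 * ((2 * (p / q) + 4) * klFun (p / q)) / 3 := by gcongr
    _ = (2 * p + 4 * q) / 3 * (q * klFun (p / q)) := by field_simp

-- Pinsker's inequality, without normalising the total masses.
theorem tsum_abs_sub_le_sqrt_mul_sqrt_klFun {ι : Type*} {p q : ι → ℝ} {a b K : ℝ}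
    (hp₀ : ∀ i, 0 ≤ p i) (hq₀ : ∀ i, 0 < q i) (hp : HasSum p a) (hq : HasSum q b)
    (hK : HasSum (fun i => q i * klFun (p i / q i)) K) :
    ∑' i, |p i - q i| ≤ √((2 * a + 4 * b) / 3) * √K := by
  have hu : HasSum (fun i => (2 * p i + 4 * q i) / 3) ((2 * a + 4 * b) / 3) :=
    ((hp.mul_left 2).add (hq.mul_left 4)).div_const 3
  have hu₀ : ∀ i, 0 ≤ (2 * p i + 4 * q i) / 3 := fun i => by linarith [hp₀ i, hq₀ i]
  have hK₀ : ∀ i, 0 ≤ q i * klFun (p i / q i) := fun i =>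
    mul_nonneg (hq₀ i).le (klFun_nonneg (div_nonneg (hp₀ i) (hq₀ i).le))
  refine Real.tsum_le_of_sum_le (fun _ => abs_nonneg _) fun s => ?_
  calc ∑ i ∈ s, |p i - q i|
      ≤ ∑ i ∈ s, √((2 * p i + 4 * q i) / 3) * √(q i * klFun (p i / q i)) :=
        Finset.sum_le_sum fun i _ => abs_sub_le_sqrt_mul_sqrt_klFun (hp₀ i) (hq₀ i)
    _ ≤ √(∑ i ∈ s, (2 * p i + 4 * q i) / 3) *
          √(∑ i ∈ s, q i * klFun (p i / q i)) :=
        sum_sqrt_mul_sqrt_le s hu₀ hK₀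
    _ ≤ √((2 * a + 4 * b) / 3) * √K := by
        gcongr
        · exact sum_le_hasSum s (fun i _ => hu₀ i) hu
        · exact sum_le_hasSum s (fun i _ => hK₀ i) hK

end Sums

section Trees

theorem exists_forall_ofFn_mem {α : Type*} {G : Set (List α)} (hnil : [] ∈ G)
    (hext : ∀ y ∈ G, ∃ a, y ++ [a] ∈ G) :
    ∃ ξ : ℕ → α, ∀ n, (List.ofFn fun i : Fin n => ξ i) ∈ G := by
  choose next hnext using fun y : G => hext y y.2
  let walk : ℕ → G := Nat.rec ⟨[], hnil⟩ fun _ y => ⟨y ++ [next y], hnext y⟩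
  have hwalk : ∀ n, (List.ofFn fun i : Fin n => next (walk i)) = (walk n).1 := by
    intro n
    induction n with
    | zero => rfl
    | succ n ih =>
      rw [List.ofFn_succ_last]
      exact congrArg (· ++ [next (walk n)]) ih
  exact ⟨fun n => next (walk n), fun n => (hwalk n).symm ▸ (walk n).2⟩

variable {T : Set (List ℕ)} {x y v : List ℕ}

theorem cone_nil : cone T [] = bdry T :=
  Set.ext fun _ => and_iff_left List.nil_prefix

theorem cone_subset_bdry : cone T x ⊆ bdry T := fun _ hv => hv.1

theorem mem_bdry_or_exists_append_mem (hx : x ∈ T) : x ∈ bdry T ∨ ∃ n, x ++ [n] ∈ T := by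
  by_cases h : succs T x = ∅
  · exact .inl ⟨hx, h⟩
  · obtain ⟨_, hy, n, rfl⟩ := Set.nonempty_iff_ne_empty.2 h
    exact .inr ⟨n, hy⟩

theorem cone_nonempty (hT : IsTree T) (hG : NoInfGeo T) (hx : x ∈ T) : (cone T x).Nonempty := by
  by_contra hempty
  -- Otherwise the path to `x` can be prolonged forever inside `T`.
  obtain ⟨ξ, hξ⟩ := exists_forall_ofFn_mem (G := {y | y ∈ T ∧ (y <+: x ∨ x <+: y)})
    ⟨hT.1, .inl List.nil_prefix⟩ <| by
      rintro y ⟨hy, ⟨_ | ⟨n, l⟩, rfl⟩ | hxy⟩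
      · rw [List.append_nil] at hempty hx ⊢
        obtain hleaf | ⟨n, hn⟩ := mem_bdry_or_exists_append_mem hx
        · exact absurd ⟨y, hleaf, List.prefix_rfl⟩ hempty
        · exact ⟨n, hn, .inr (List.prefix_append _ _)⟩
      · have hprefix : y ++ [n] <+: y ++ n :: l := ⟨l, by simp⟩
        exact ⟨n, hT.2 _ hx _ hprefix, .inl hprefix⟩
      · obtain hleaf | ⟨n, hn⟩ := mem_bdry_or_exists_append_mem hy
        · exact absurd ⟨y, hleaf, hxy⟩ hempty
        · exact ⟨n, hn, .inr (hxy.trans (List.prefix_append _ _))⟩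
  exact hG ⟨ξ, fun n => (hξ n).1⟩

theorem cone_eq_singleton (hT : IsTree T) (hv : v ∈ bdry T) : cone T v = {v} := by
  refine Set.eq_singleton_iff_unique_mem.2 ⟨⟨hv, List.prefix_rfl⟩, ?_⟩
  rintro _ ⟨hw, _ | ⟨n, l⟩, rfl⟩
  · exact List.append_nil v
  · have hmem : v ++ [n] ∈ succs T v := ⟨hT.2 _ hw.1 _ ⟨l, by simp⟩, n, rfl⟩
    rw [hv.2] at hmem
    exact hmem.elim

theorem eq_take_of_mem_succs (hy : y ∈ succs T x) (hyv : y <+: v) :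
    y = v.take (x.length + 1) := by
  obtain ⟨_, n, rfl⟩ := hy
  simpa only [List.length_append, List.length_singleton] using List.prefix_iff_eq_take.1 hyv

theorem take_succ_mem_succs (hT : IsTree T) (hv : v ∈ T) {i : ℕ} (hi : i < v.length) :
    v.take (i + 1) ∈ succs T (v.take i) :=
  ⟨hT.2 v hv _ (List.take_prefix _ _), v[i], (List.take_append_getElem hi).symm⟩

theorem take_mem_intr (hT : IsTree T) (hv : v ∈ T) {i : ℕ} (hi : i < v.length) :
    v.take i ∈ intr T :=
  ⟨hT.2 v hv _ (List.take_prefix _ _), fun hleaf =>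
    (hleaf.2 ▸ take_succ_mem_succs hT hv hi : v.take (i + 1) ∈ (∅ : Set (List ℕ)))⟩

theorem prefix_of_mem_succs (hy : y ∈ succs T x) : x <+: y := by
  obtain ⟨_, n, rfl⟩ := hy
  exact List.prefix_append _ _

theorem length_lt_of_mem_cone (hx : x ∈ intr T) (hv : v ∈ cone T x) : x.length < v.length :=
  lt_of_le_of_ne hv.2.length_le fun h => hx.2 (hv.2.eq_of_length h ▸ hv.1)

/-- The edges of `T`, each given by its interior endpoint and a successor of it. -/
abbrev Edge (T : Set (List ℕ)) : Type := Σ x : intr T, succs T x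

theorem Edge.ext {e e' : Edge T} (hfst : (e.1 : List ℕ) = e'.1) (hsnd : (e.2 : List ℕ) = e'.2) :
    e = e' := by
  obtain ⟨⟨x, hx⟩, y, hy⟩ := e
  obtain ⟨⟨x', hx'⟩, y', hy'⟩ := e'
  obtain rfl : x = x' := hfst
  obtain rfl : y = y' := hsnd
  rfl

/-- The edges traversed by the path from the root to `v`, in order; it turns sums along the path
into sums over `Edge T`. -/
def pathEdge (hT : IsTree T) (hv : v ∈ T) (i : Fin v.length) : Edge T :=
  ⟨⟨v.take i, take_mem_intr hT hv i.2⟩, ⟨v.take (i + 1), take_succ_mem_succs hT hv i.2⟩⟩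

theorem pathEdge_injective (hT : IsTree T) (hv : v ∈ T) :
    Function.Injective (pathEdge hT hv) := fun i j hij => by
  have hlength := congrArg (fun e : Edge T => (e.1 : List ℕ).length) hij
  simp only [pathEdge, List.length_take_of_le, i.2.le, j.2.le] at hlength
  exact Fin.ext hlength

theorem mem_range_pathEdge (hT : IsTree T) (hv : v ∈ T) {e : Edge T}
    (he : (e.2 : List ℕ) <+: v) : e ∈ Set.range (pathEdge hT hv) := by
  have hx := List.prefix_iff_eq_take.1 ((prefix_of_mem_succs e.2.2).trans he)
  have hy := eq_take_of_mem_succs e.2.2 he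
  have hlt : (e.1 : List ℕ).length < v.length := by
    obtain ⟨_, n, hn⟩ := e.2.2
    have hle := he.length_le
    rwa [hn, List.length_append, List.length_singleton, Nat.succ_le_iff] at hle
  exact ⟨⟨_, hlt⟩, Edge.ext hx.symm hy.symm⟩

/-- The sum of the edge weights `g` along the path from the root to `v`; for weights `ℓ x`
depending only on the starting vertex it is `|v|_ℓ`. -/
def pathSum (g : List ℕ → List ℕ → ℝ) (v : List ℕ) : ℝ :=
  ∑ i ∈ Finset.range v.length, g (v.take i) (v.take (i + 1))

end Trees

section Mass

variable {T : Set (List ℕ)} {P : List ℕ → ℝ} {x y v : List ℕ}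

theorem mass_of_mem_bdry (hT : IsTree T) (hv : v ∈ bdry T) : mass T P v = P v := by
  rw [mass, cone_eq_singleton hT hv, tsum_singleton]

theorem hasSum_indicator_cone_succs (hT : IsTree T) (hx : x ∈ intr T) (hv : v ∈ bdry T) :
    HasSum (fun y : succs T x => (cone T y).indicator P v) ((cone T x).indicator P v) := by
  by_cases hvx : v ∈ cone T x
  · have hlt := length_lt_of_mem_cone hx hvx
    have hmem := take_succ_mem_succs hT hv.1 hlt
    rw [← List.prefix_iff_eq_take.1 hvx.2] at hmem
    have hsingle := hasSum_single (f := fun y : succs T x => (cone T y).indicator P v)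
      ⟨_, hmem⟩ fun y hy => Set.indicator_of_notMem
        (fun hvy => hy (Subtype.ext (eq_take_of_mem_succs y.2 hvy.2))) P
    rwa [Set.indicator_of_mem (show v ∈ cone T _ from ⟨hv, List.take_prefix _ _⟩),
      ← Set.indicator_of_mem hvx P] at hsingle
  · have hzero : ∀ y : succs T x, (cone T y).indicator P v = 0 := fun y =>
      Set.indicator_of_notMem (fun hvy => hvx ⟨hv, (prefix_of_mem_succs y.2).trans hvy.2⟩) P
    simpa only [hzero, Set.indicator_of_notMem hvx] using hasSum_zero

namespace IsProbOn

theorem mass_nil (hP : IsProbOn (bdry T) P) : mass T P [] = 1 := by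
  rw [mass, cone_nil, hP.2.tsum_eq]

theorem summable_cone (hP : IsProbOn (bdry T) P) (x : List ℕ) :
    Summable fun v : cone T x => P v :=
  hP.2.summable.comp_injective (Set.inclusion_injective cone_subset_bdry)

theorem hasSum_indicator_cone (hP : IsProbOn (bdry T) P) (x : List ℕ) :
    HasSum (fun v : bdry T => (cone T x).indicator P v) (mass T P x) := by
  refine (hasSum_subtype_iff_indicator (f := (cone T x).indicator P)).2 ?_
  rw [Set.indicator_indicator, Set.inter_eq_right.2 cone_subset_bdry]
  exact hasSum_subtype_iff_indicator.1 (hP.summable_cone x).hasSum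

theorem indicator_cone_nonneg (hP : IsProbOn (bdry T) P) (x v : List ℕ) :
    0 ≤ (cone T x).indicator P v :=
  Set.indicator_nonneg (fun w hw => (hP.1 w hw.1).le) v

theorem mass_pos (hP : IsProbOn (bdry T) P) (hx : (cone T x).Nonempty) : 0 < mass T P x := by
  obtain ⟨v, hv⟩ := hx
  exact (hP.summable_cone x).tsum_pos (fun w => (hP.1 w w.2.1).le) ⟨v, hv⟩ (hP.1 v hv.1)

theorem hasSum_mass_succs (hT : IsTree T) (hP : IsProbOn (bdry T) P) (hx : x ∈ intr T) :
    HasSum (fun y : succs T x => mass T P y) (mass T P x) :=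
  hasSum_comm_of_nonneg (fun (v : bdry T) y => hP.indicator_cone_nonneg y v)
    (fun v => hasSum_indicator_cone_succs hT hx v.2) (hP.hasSum_indicator_cone x)
    fun y => hP.hasSum_indicator_cone y

theorem hasSum_fwd (hT : IsTree T) (hP : IsProbOn (bdry T) P) (hx : x ∈ intr T)
    (hcone : (cone T x).Nonempty) : HasSum (fun y : succs T x => fwd T P x y) 1 := by
  simpa only [fwd, div_self (hP.mass_pos hcone).ne'] using
    (hP.hasSum_mass_succs hT hx).div_const (mass T P x)

end IsProbOn

end Mass

section Decomposition

/-- The information content `−log₂ q(y|x)` of the step from `x` to `y` under `Q`, in bits. -/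
def surprisal (T : Set (List ℕ)) (Q : List ℕ → ℝ) (x y : List ℕ) : ℝ :=
  -Real.logb 2 (fwd T Q x y)

variable {T : Set (List ℕ)} {P Q : List ℕ → ℝ}

theorem hasSum_edge_indicator_cone (hT : IsTree T) (g : List ℕ → List ℕ → ℝ) {v : List ℕ}
    (hv : v ∈ bdry T) :
    HasSum (fun e : Edge T => (cone T e.2).indicator P v * g e.1 e.2) (P v * pathSum g v) := by
  refine ((pathEdge_injective hT hv.1).hasSum_iff fun e he => ?_).1 ?_
  · have hnotMem : v ∉ cone T e.2 := fun hve => he (mem_range_pathEdge hT hv.1 hve.2)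
    rw [Set.indicator_of_notMem hnotMem, zero_mul]
  · have hpath : ∀ i : Fin v.length,
        (cone T (v.take (i + 1))).indicator P v * g (v.take i) (v.take (i + 1))
          = P v * g (v.take i) (v.take (i + 1)) := fun i => by
      rw [Set.indicator_of_mem (show v ∈ cone T _ from ⟨hv, List.take_prefix _ _⟩)]
    rw [pathSum, ← Fin.sum_univ_eq_sum_range fun i => g (v.take i) (v.take (i + 1)),
      Finset.mul_sum, ← Finset.sum_congr rfl fun i _ => hpath i]
    exact hasSum_fintype _

namespace IsProbOn

theorem hasSum_edge_of_hasSum_pathSum (hT : IsTree T) (hP : IsProbOn (bdry T) P)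
    {g : List ℕ → List ℕ → ℝ} (hg : ∀ e : Edge T, 0 ≤ g e.1 e.2) {s : ℝ}
    (hs : HasSum (fun v : bdry T => P v * pathSum g v) s) :
    HasSum (fun e : Edge T => mass T P e.2 * g e.1 e.2) s :=
  hasSum_comm_of_nonneg (fun (v : bdry T) e => mul_nonneg (hP.indicator_cone_nonneg e.2 v) (hg e))
    (fun v => hasSum_edge_indicator_cone hT g v.2) hs
    fun e => (hP.hasSum_indicator_cone e.2).mul_right (g e.1 e.2)

theorem hasSum_node_of_hasSum_pathSum (hT : IsTree T) (hcone : ∀ x ∈ T, (cone T x).Nonempty)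
    (hP : IsProbOn (bdry T) P) {g : List ℕ → List ℕ → ℝ} (hg : ∀ e : Edge T, 0 ≤ g e.1 e.2)
    {s : ℝ} (hs : HasSum (fun v : bdry T => P v * pathSum g v) s) :
    HasSum (fun x : intr T => mass T P x * ∑' y : succs T x, fwd T P x y * g x y) s := by
  have hedge := hP.hasSum_edge_of_hasSum_pathSum hT hg hs
  refine hedge.sigma fun x => ?_
  have hfiber : ∀ y : succs T x, mass T P x * (fwd T P x y * g x y) = mass T P y * g x y :=
    fun y => by
      have := (hP.mass_pos (hcone x x.2.1)).ne'
      rw [fwd]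
      field_simp
  rw [← tsum_mul_left, tsum_congr hfiber]
  exact (hedge.summable.sigma_factor x).hasSum

theorem hasSum_mass_mul_length (hT : IsTree T) (hcone : ∀ x ∈ T, (cone T x).Nonempty)
    (hP : IsProbOn (bdry T) P) {ℓ : List ℕ → ℝ} (hℓ : ∀ x ∈ intr T, 0 ≤ ℓ x)
    (hlen : Summable fun v : bdry T => lenWt ℓ v * P v) :
    HasSum (fun x : intr T => mass T P x * ℓ x) (expLen T ℓ P) := by
  have hpath : HasSum (fun v : bdry T => P v * pathSum (fun x _ => ℓ x) v) (expLen T ℓ P) :=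
    hlen.hasSum.congr_fun fun v => mul_comm _ _
  refine (hP.hasSum_node_of_hasSum_pathSum hT hcone (fun e => hℓ e.1 e.1.2) hpath).congr_fun
    fun x => ?_
  rw [tsum_mul_right, (hP.hasSum_fwd hT x.2 (hcone x x.2.1)).tsum_eq, one_mul]

theorem fwd_pos (hcone : ∀ x ∈ T, (cone T x).Nonempty) (hP : IsProbOn (bdry T) P)
    {x y : List ℕ} (hx : x ∈ T) (hy : y ∈ T) : 0 < fwd T P x y :=
  div_pos (hP.mass_pos (hcone y hy)) (hP.mass_pos (hcone x hx))

theorem fwd_mem_Icc (hT : IsTree T) (hcone : ∀ x ∈ T, (cone T x).Nonempty)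
    (hP : IsProbOn (bdry T) P) {x y : List ℕ} (hx : x ∈ intr T) (hy : y ∈ succs T x) :
    fwd T P x y ∈ Set.Icc 0 1 :=
  ⟨(hP.fwd_pos hcone hx.1 hy.1).le,
    le_hasSum (hP.hasSum_fwd hT hx (hcone x hx.1)) ⟨y, hy⟩
      fun z _ => (hP.fwd_pos hcone hx.1 z.2.1).le⟩

theorem Hloc_nonneg (hT : IsTree T) (hcone : ∀ x ∈ T, (cone T x).Nonempty)
    (hP : IsProbOn (bdry T) P) {x : List ℕ} (hx : x ∈ intr T) : 0 ≤ Hloc T P x :=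
  tsum_nonneg fun y => phi_nonneg (hP.fwd_mem_Icc hT hcone hx y.2)

theorem surprisal_nonneg (hT : IsTree T) (hcone : ∀ x ∈ T, (cone T x).Nonempty)
    (hP : IsProbOn (bdry T) P) (e : Edge T) : 0 ≤ surprisal T P e.1 e.2 := by
  obtain ⟨hnonneg, hle_one⟩ := hP.fwd_mem_Icc hT hcone e.1.2 e.2.2
  exact neg_nonneg.2 (Real.logb_nonpos one_lt_two hnonneg hle_one)

theorem pathSum_surprisal (hT : IsTree T) (hcone : ∀ x ∈ T, (cone T x).Nonempty)
    (hP : IsProbOn (bdry T) P) {v : List ℕ} (hv : v ∈ bdry T) :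
    pathSum (surprisal T P) v = -Real.logb 2 (P v) := by
  have hmass : ∀ i, mass T P (v.take i) ≠ 0 := fun i =>
    (hP.mass_pos (hcone _ (hT.2 v hv.1 _ (List.take_prefix i v)))).ne'
  simp only [pathSum, surprisal, fwd, Real.logb_div (hmass _) (hmass _), Finset.sum_neg_distrib]
  rw [Finset.sum_range_sub fun i => Real.logb 2 (mass T P (v.take i)), List.take_length,
    List.take_zero, hP.mass_nil, mass_of_mem_bdry hT hv, Real.logb_one, sub_zero]

end IsProbOn

/-- The Shannon entropy `H(P)` of a measure on the boundary, in bits. -/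
def entropy (T : Set (List ℕ)) (P : List ℕ → ℝ) : ℝ := ∑' v : bdry T, phi (P v)

/-- The relative entropy `D(P‖Q)`, in bits. -/
def relEntropy (T : Set (List ℕ)) (P Q : List ℕ → ℝ) : ℝ :=
  ∑' v : bdry T, P v * Real.logb 2 (P v / Q v)

/-- The intermediate quantity `∑_x P(∂T_x)·H_q(x)`: the local entropies of `Q` weighted by the
node masses of `P`. It equals `H(P)` when `P = Q`. -/
def mixedEntropy (T : Set (List ℕ)) (P Q : List ℕ → ℝ) : ℝ :=
  ∑' x : intr T, mass T P x * Hloc T Q x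

/-- The `ℓ¹` distance `∑_{y∈N(x)} |p(y|x) − q(y|x)|` of the transition probabilities at `x`. -/
def fwdDist (T : Set (List ℕ)) (P Q : List ℕ → ℝ) (x : List ℕ) : ℝ :=
  ∑' y : succs T x, |fwd T P x y - fwd T Q x y|

theorem hasSum_mul_neg_logb (hHP : Summable fun v : bdry T => phi (P v)) :
    HasSum (fun v : bdry T => P v * -Real.logb 2 (P v)) (entropy T P) :=
  hHP.hasSum.congr_fun fun v => (phi_eq_mul_neg_logb (P v)).symm

namespace IsProbOn

theorem hasSum_mass_mul_Hloc (hT : IsTree T) (hcone : ∀ x ∈ T, (cone T x).Nonempty)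
    (hP : IsProbOn (bdry T) P) (hHP : Summable fun v : bdry T => phi (P v)) :
    HasSum (fun x : intr T => mass T P x * Hloc T P x) (entropy T P) := by
  refine (hP.hasSum_node_of_hasSum_pathSum hT hcone (g := surprisal T P)
    (hP.surprisal_nonneg hT hcone)
    ((hasSum_mul_neg_logb hHP).congr_fun fun v => ?_)).congr_fun fun x => ?_
  · rw [hP.pathSum_surprisal hT hcone v.2]
  · simp only [Hloc, phi_eq_mul_neg_logb, surprisal]

theorem hasSum_mass_mul_surprisal_sub (hT : IsTree T) (hcone : ∀ x ∈ T, (cone T x).Nonempty)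
    (hP : IsProbOn (bdry T) P) (hQ : IsProbOn (bdry T) Q)
    (hHP : Summable fun v : bdry T => phi (P v))
    (hD : Summable fun v : bdry T => P v * Real.logb 2 (P v / Q v)) :
    HasSum (fun e : Edge T => mass T P e.2 *
      (surprisal T Q e.1 e.2 - surprisal T P e.1 e.2)) (relEntropy T P Q) := by
  have hself : HasSum (fun e : Edge T => mass T P e.2 * surprisal T P e.1 e.2)
      (entropy T P) := by
    refine hP.hasSum_edge_of_hasSum_pathSum hT (g := surprisal T P)
      (hP.surprisal_nonneg hT hcone)
      ((hasSum_mul_neg_logb hHP).congr_fun fun v => ?_)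
    rw [hP.pathSum_surprisal hT hcone v.2]
  have hcross : HasSum (fun e : Edge T => mass T P e.2 * surprisal T Q e.1 e.2)
      (entropy T P + relEntropy T P Q) := by
    refine hP.hasSum_edge_of_hasSum_pathSum hT (g := surprisal T Q)
      (hQ.surprisal_nonneg hT hcone)
      (((hasSum_mul_neg_logb hHP).add hD.hasSum).congr_fun fun v => ?_)
    rw [hQ.pathSum_surprisal hT hcone v.2,
      Real.logb_div (hP.1 v v.2).ne' (hQ.1 v v.2).ne']
    ring
  have hdiff := hcross.sub hself
  rw [add_sub_cancel_left] at hdiff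
  exact hdiff.congr_fun fun e => mul_sub _ _ _

end IsProbOn

end Decomposition

section Comparison

variable {T : Set (List ℕ)} {ℓ P Q : List ℕ → ℝ}

/-- The flow along each edge of a walk that reaches `x` with the node mass of `P` and steps from
`x` to `y` with the transition probability of `Q`. For `P = Q` it is `P(∂T_y)`. -/
def edgeFlow (T : Set (List ℕ)) (P Q : List ℕ → ℝ) (e : Edge T) : ℝ :=
  mass T P e.1 * fwd T Q e.1 e.2

namespace IsProbOn

theorem edgeFlow_self (hcone : ∀ x ∈ T, (cone T x).Nonempty) (hP : IsProbOn (bdry T) P)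
    (e : Edge T) : edgeFlow T P P e = mass T P e.2 :=
  mul_div_cancel₀ _ (hP.mass_pos (hcone e.1 e.1.2.1)).ne'

theorem edgeFlow_pos (hcone : ∀ x ∈ T, (cone T x).Nonempty) (hP : IsProbOn (bdry T) P)
    (hQ : IsProbOn (bdry T) Q) (e : Edge T) : 0 < edgeFlow T P Q e :=
  mul_pos (hP.mass_pos (hcone e.1 e.1.2.1)) (hQ.fwd_pos hcone e.1.2.1 e.2.2.1)

theorem hasSum_edgeFlow (hT : IsTree T) (hcone : ∀ x ∈ T, (cone T x).Nonempty)
    (hP : IsProbOn (bdry T) P) (hQ : IsProbOn (bdry T) Q)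
    (hlen : Summable fun v : bdry T => lenWt (fun _ => 1) v * P v) :
    HasSum (edgeFlow T P Q) (expLen T (fun _ => 1) P) := by
  refine hasSum_sigma_of_nonneg (fun e => (hP.edgeFlow_pos hcone hQ e).le) (fun x => ?_)
    (hP.hasSum_mass_mul_length hT hcone (fun _ _ => zero_le_one) hlen)
  exact (hQ.hasSum_fwd hT x.2 (hcone x x.2.1)).mul_left (mass T P x)

theorem hasSum_edgeFlow_mul_klFun (hT : IsTree T) (hcone : ∀ x ∈ T, (cone T x).Nonempty)
    (hP : IsProbOn (bdry T) P) (hQ : IsProbOn (bdry T) Q)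
    (hlen : Summable fun v : bdry T => lenWt (fun _ => 1) v * P v)
    (hHP : Summable fun v : bdry T => phi (P v))
    (hD : Summable fun v : bdry T => P v * Real.logb 2 (P v / Q v)) :
    HasSum (fun e => edgeFlow T P Q e *
      InformationTheory.klFun (edgeFlow T P P e / edgeFlow T P Q e))
      (Real.log 2 * relEntropy T P Q) := by
  have hflow := (hP.hasSum_edgeFlow hT hcone hQ hlen).sub (hP.hasSum_edgeFlow hT hcone hP hlen)
  have hsum := ((hP.hasSum_mass_mul_surprisal_sub hT hcone hQ hHP hD).mul_left (Real.log 2)).add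
    hflow
  rw [sub_self, add_zero] at hsum
  refine hsum.congr_fun fun e => ?_
  have hmass := (hP.mass_pos (hcone e.1 e.1.2.1)).ne'
  have hp := (hP.fwd_pos hcone e.1.2.1 e.2.2.1).ne'
  have hq := (hQ.fwd_pos hcone e.1.2.1 e.2.2.1).ne'
  have hlog2 := (Real.log_pos one_lt_two).ne'
  rw [← hP.edgeFlow_self hcone]
  simp only [edgeFlow, surprisal, Real.logb, InformationTheory.klFun]
  rw [mul_div_mul_left _ _ hmass, Real.log_div hp hq]
  field_simp
  ring

theorem summable_abs_edgeFlow_sub (hT : IsTree T) (hcone : ∀ x ∈ T, (cone T x).Nonempty)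
    (hP : IsProbOn (bdry T) P) (hQ : IsProbOn (bdry T) Q)
    (hlen : Summable fun v : bdry T => lenWt (fun _ => 1) v * P v) :
    Summable fun e => |edgeFlow T P P e - edgeFlow T P Q e| :=
  ((hP.hasSum_edgeFlow hT hcone hP hlen).summable.sub
    (hP.hasSum_edgeFlow hT hcone hQ hlen).summable).abs

theorem summable_abs_fwd_sub (hT : IsTree T) (hP : IsProbOn (bdry T) P)
    (hQ : IsProbOn (bdry T) Q) {x : List ℕ} (hx : x ∈ intr T) (hcone : (cone T x).Nonempty) :
    Summable fun y : succs T x => |fwd T P x y - fwd T Q x y| :=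
  ((hP.hasSum_fwd hT hx hcone).summable.sub (hQ.hasSum_fwd hT hx hcone).summable).abs

theorem hasSum_mass_mul_fwdDist (hT : IsTree T) (hcone : ∀ x ∈ T, (cone T x).Nonempty)
    (hP : IsProbOn (bdry T) P) (hQ : IsProbOn (bdry T) Q)
    (hlen : Summable fun v : bdry T => lenWt (fun _ => 1) v * P v) :
    HasSum (fun x : intr T => mass T P x * fwdDist T P Q x)
      (∑' e, |edgeFlow T P P e - edgeFlow T P Q e|) := by
  refine (hP.summable_abs_edgeFlow_sub hT hcone hQ hlen).hasSum.sigma fun x => ?_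
  refine ((hP.summable_abs_fwd_sub hT hQ x.2 (hcone x x.2.1)).hasSum.mul_left _).congr_fun
    fun y => ?_
  rw [edgeFlow, edgeFlow, ← mul_sub, abs_mul, abs_of_pos (hP.mass_pos (hcone x x.2.1))]

theorem tsum_abs_edgeFlow_sub_le (hT : IsTree T) (hcone : ∀ x ∈ T, (cone T x).Nonempty)
    (hP : IsProbOn (bdry T) P) (hQ : IsProbOn (bdry T) Q)
    (hlen : Summable fun v : bdry T => lenWt (fun _ => 1) v * P v)
    (hHP : Summable fun v : bdry T => phi (P v))
    (hD : Summable fun v : bdry T => P v * Real.logb 2 (P v / Q v)) :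
    ∑' e, |edgeFlow T P P e - edgeFlow T P Q e| ≤
      √(2 * expLen T (fun _ => 1) P) * √(Real.log 2 * relEntropy T P Q) := by
  have h := tsum_abs_sub_le_sqrt_mul_sqrt_klFun (fun e => (hP.edgeFlow_pos hcone hP e).le)
    (hP.edgeFlow_pos hcone hQ) (hP.hasSum_edgeFlow hT hcone hP hlen)
    (hP.hasSum_edgeFlow hT hcone hQ hlen)
    (hP.hasSum_edgeFlow_mul_klFun hT hcone hQ hlen hHP hD)
  convert h using 3
  ring

end IsProbOn

/-- Uniform summability of the local entropy series of `P` and `Q` at level `ε`: at each interior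
vertex all but at most `M` successors contribute less than `ε` in total to `H_p` and to `H_q`. -/
def UniformEntropyTails (T : Set (List ℕ)) (P Q : List ℕ → ℝ) (ε : ℝ) (M : ℕ) : Prop :=
  ∀ x ∈ intr T, ∃ F : Finset (List ℕ), ↑F ⊆ succs T x ∧ F.card ≤ M ∧
    (Summable fun y : {y : List ℕ // y ∈ succs T x ∧ y ∉ F} => phi (fwd T P x y)) ∧
    (∑' y : {y : List ℕ // y ∈ succs T x ∧ y ∉ F}, phi (fwd T P x y)) < ε ∧
    (Summable fun y : {y : List ℕ // y ∈ succs T x ∧ y ∉ F} => phi (fwd T Q x y)) ∧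
    (∑' y : {y : List ℕ // y ∈ succs T x ∧ y ∉ F}, phi (fwd T Q x y)) < ε

theorem abs_Hloc_sub_Hloc_le (hT : IsTree T) (hcone : ∀ x ∈ T, (cone T x).Nonempty)
    (hP : IsProbOn (bdry T) P) (hQ : IsProbOn (bdry T) Q) {ε δ : ℝ} {M : ℕ}
    (hM : UniformEntropyTails T P Q ε M) (hδ₀ : 0 < δ) (hδ : δ ≤ 1 / 2) {x : List ℕ}
    (hx : x ∈ intr T) :
    |Hloc T P x - Hloc T Q x| ≤
      2 * ε + M * phi δ + 2 / (Real.exp 1 * Real.log 2 * δ) * fwdDist T P Q x := by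
  obtain ⟨F, hF, hcard, hp, hp_tail, hq, hq_tail⟩ := hM x hx
  have hlocal := abs_tsum_phi_sub_tsum_phi_le hF (fun _ => hP.fwd_mem_Icc hT hcone hx)
    (fun _ => hQ.fwd_mem_Icc hT hcone hx)
    (hP.summable_abs_fwd_sub hT hQ hx (hcone x hx.1)) hp hp_tail hq hq_tail hδ₀ hδ
  have hphi : 0 ≤ phi δ := phi_nonneg ⟨hδ₀.le, by linarith⟩
  calc |Hloc T P x - Hloc T Q x|
      ≤ 2 * ε + F.card * phi δ + 2 / (Real.exp 1 * Real.log 2 * δ) * fwdDist T P Q x := hlocal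
    _ ≤ 2 * ε + M * phi δ + 2 / (Real.exp 1 * Real.log 2 * δ) * fwdDist T P Q x := by gcongr

theorem abs_entropy_sub_mixedEntropy_le (hT : IsTree T) (hcone : ∀ x ∈ T, (cone T x).Nonempty)
    (hP : IsProbOn (bdry T) P) (hQ : IsProbOn (bdry T) Q)
    (hlen : Summable fun v : bdry T => lenWt (fun _ => 1) v * P v)
    (hHP : Summable fun v : bdry T => phi (P v))
    (hD : Summable fun v : bdry T => P v * Real.logb 2 (P v / Q v))
    (hmixed : Summable fun x : intr T => mass T P x * Hloc T Q x) {ε δ : ℝ} {M : ℕ}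
    (hM : UniformEntropyTails T P Q ε M) (hδ₀ : 0 < δ) (hδ : δ ≤ 1 / 2) :
    |entropy T P - mixedEntropy T P Q| ≤ expLen T (fun _ => 1) P * (2 * ε + M * phi δ)
      + 2 / (Real.exp 1 * Real.log 2 * δ) *
        (√(2 * expLen T (fun _ => 1) P) * √(Real.log 2 * relEntropy T P Q)) := by
  have hmass := hP.hasSum_mass_mul_length hT hcone (fun _ _ => zero_le_one) hlen
  have hbound := (hmass.mul_right (2 * ε + M * phi δ)).add
    ((hP.hasSum_mass_mul_fwdDist hT hcone hQ hlen).mul_left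
      (2 / (Real.exp 1 * Real.log 2 * δ)))
  refine (((hP.hasSum_mass_mul_Hloc hT hcone hHP).sub hmixed.hasSum).norm_le_of_bounded hbound
    fun x => ?_).trans ?_
  · have hx := hP.mass_pos (hcone x x.2.1)
    rw [← mul_sub, norm_mul, Real.norm_of_nonneg hx.le, Real.norm_eq_abs]
    calc mass T P x * |Hloc T P x - Hloc T Q x|
        ≤ mass T P x *
          (2 * ε + M * phi δ + 2 / (Real.exp 1 * Real.log 2 * δ) * fwdDist T P Q x) := by
          gcongr
          exact abs_Hloc_sub_Hloc_le hT hcone hP hQ hM hδ₀ hδ x.2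
      _ = _ := by ring
  · gcongr
    exact hP.tsum_abs_edgeFlow_sub_le hT hcone hQ hlen hHP hD

namespace IsProbOn

theorem expLen_pos (hT : IsTree T) (hcone : ∀ x ∈ T, (cone T x).Nonempty)
    (hroot : [] ∈ intr T) (hℓ : ∀ x ∈ intr T, 0 < ℓ x) (hP : IsProbOn (bdry T) P)
    (hlen : Summable fun v : bdry T => lenWt ℓ v * P v) : 0 < expLen T ℓ P := by
  have hnode := hP.hasSum_mass_mul_length hT hcone (fun x hx => (hℓ x hx).le) hlen
  have hpos : ∀ x : intr T, 0 < mass T P x * ℓ x := fun x =>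
    mul_pos (hP.mass_pos (hcone x x.2.1)) (hℓ x x.2)
  exact (hpos ⟨[], hroot⟩).trans_le (le_hasSum hnode _ fun x _ => (hpos x).le)

theorem hasSum_nodeAvg (hT : IsTree T) (hcone : ∀ x ∈ T, (cone T x).Nonempty)
    (hroot : [] ∈ intr T) (hℓ : ∀ x ∈ intr T, 0 < ℓ x) (hP : IsProbOn (bdry T) P)
    (hlen : Summable fun v : bdry T => lenWt ℓ v * P v) :
    HasSum (fun x : intr T => nodeAvg T ℓ P x) 1 := by
  have h := (hP.hasSum_mass_mul_length hT hcone (fun x hx => (hℓ x hx).le) hlen).div_const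
    (expLen T ℓ P)
  rw [div_self (hP.expLen_pos hT hcone hroot hℓ hlen).ne'] at h
  exact h.congr_fun fun x => by rw [nodeAvg, mul_comm]

theorem summable_mass_mul_Hloc (hT : IsTree T) (hcone : ∀ x ∈ T, (cone T x).Nonempty)
    (hℓ : ∀ x ∈ intr T, 0 < ℓ x) (hP : IsProbOn (bdry T) P) (hQ : IsProbOn (bdry T) Q)
    (hlen : Summable fun v : bdry T => lenWt ℓ v * P v) {A : ℝ}
    (hA : ∀ x ∈ intr T, Hloc T Q x / ℓ x ≤ A) :
    Summable fun x : intr T => mass T P x * Hloc T Q x := by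
  have hnode := hP.hasSum_mass_mul_length hT hcone (fun x hx => (hℓ x hx).le) hlen
  refine (hnode.summable.mul_left A).of_nonneg_of_le (fun x =>
    mul_nonneg (hP.mass_pos (hcone x x.2.1)).le (hQ.Hloc_nonneg hT hcone x.2)) fun x => ?_
  calc mass T P x * Hloc T Q x ≤ mass T P x * (A * ℓ x) :=
        mul_le_mul_of_nonneg_left ((div_le_iff₀ (hℓ x x.2)).1 (hA x x.2))
          (hP.mass_pos (hcone x x.2.1)).le
    _ = A * (mass T P x * ℓ x) := mul_left_comm _ _ _

end IsProbOn

theorem nodeAvg_mul_div_eq {x : List ℕ} (hx : ℓ x ≠ 0) (h : ℝ) :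
    nodeAvg T ℓ P x * (h / ℓ x) = mass T P x * h / expLen T ℓ P := by
  rw [nodeAvg]
  field_simp

theorem abs_mixedEntropy_div_sub_entropy_div_le (hT : IsTree T)
    (hcone : ∀ x ∈ T, (cone T x).Nonempty) (hroot : [] ∈ intr T) (hℓ : ∀ x ∈ intr T, 0 < ℓ x)
    (hP : IsProbOn (bdry T) P) (hQ : IsProbOn (bdry T) Q)
    (hlenP : Summable fun v : bdry T => lenWt ℓ v * P v)
    (hlenQ : Summable fun v : bdry T => lenWt ℓ v * Q v)
    (hHQ : Summable fun v : bdry T => phi (Q v))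
    (hmixed : Summable fun x : intr T => mass T P x * Hloc T Q x) {A a : ℝ}
    (hAa : ∀ x ∈ intr T, Hloc T Q x / ℓ x ∈ Set.Icc a A) :
    |mixedEntropy T P Q / expLen T ℓ P - entropy T Q / expLen T ℓ Q| ≤
      (A - a) / 2 * ∑' x : intr T, |nodeAvg T ℓ P x - nodeAvg T ℓ Q x| := by
  refine abs_sub_le_osc_mul_tsum_abs_sub (hP.hasSum_nodeAvg hT hcone hroot hℓ hlenP)
    (hQ.hasSum_nodeAvg hT hcone hroot hℓ hlenQ) (fun x => hAa x x.2)
    ((hmixed.hasSum.div_const _).congr_fun fun x => ?_)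
    (((hQ.hasSum_mass_mul_Hloc hT hcone hHQ).div_const _).congr_fun fun x => ?_)
  all_goals exact nodeAvg_mul_div_eq (hℓ x x.2).ne' _

theorem pinsker_const_eq {S D l δ : ℝ} (hS : 0 ≤ S) (hl : 0 < l) :
    2 / (Real.exp 1 * Real.log 2 * δ) * (√(2 * S) * √(Real.log 2 * D)) / l
      = 2 * √2 / (Real.exp 1 * √(Real.log 2)) * √(S / l) / δ * √(D / l) := by
  have hlog2 : 0 < Real.log 2 := Real.log_pos one_lt_two
  have hsq_log : √(Real.log 2) * √(Real.log 2) = Real.log 2 := Real.mul_self_sqrt hlog2.le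
  have hsq_l : √l * √l = l := Real.mul_self_sqrt hl.le
  have hsqrt_log : √(Real.log 2) ≠ 0 := (Real.sqrt_pos.2 hlog2).ne'
  have hsqrt_l : √l ≠ 0 := (Real.sqrt_pos.2 hl).ne'
  rw [Real.sqrt_mul zero_le_two, Real.sqrt_mul hlog2.le, Real.sqrt_div hS, Real.sqrt_div' D hl.le]
  nth_rw 1 [← hsq_log, ← hsq_l]
  field_simp

theorem main_comparison_general (hT : IsTree T) (hcone : ∀ x ∈ T, (cone T x).Nonempty)
    (hroot : [] ∈ intr T) (hℓ : ∀ x ∈ intr T, 0 < ℓ x)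
    (hP : IsProbOn (bdry T) P) (hQ : IsProbOn (bdry T) Q)
    (hlenP : Summable fun v : bdry T => lenWt ℓ v * P v)
    (hlenQ : Summable fun v : bdry T => lenWt ℓ v * Q v)
    (hlenSharpP : Summable fun v : bdry T => lenWt (fun _ => 1) v * P v)
    (hHP : Summable fun v : bdry T => phi (P v)) (hHQ : Summable fun v : bdry T => phi (Q v))
    (hD : Summable fun v : bdry T => P v * Real.logb 2 (P v / Q v))
    {A a : ℝ} (hAa : ∀ x ∈ intr T, Hloc T Q x / ℓ x ∈ Set.Icc a A) {ε : ℝ} {M : ℕ}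
    (hM : UniformEntropyTails T P Q ε M) {δ : ℝ} (hδ₀ : 0 < δ) (hδ : δ ≤ 1 / 2) :
    |entropy T P / expLen T ℓ P - entropy T Q / expLen T ℓ Q|
      ≤ (expLen T (fun _ => 1) P / expLen T ℓ P) * (2 * ε + M * phi δ)
        + (2 * √2 / (Real.exp 1 * √(Real.log 2)))
            * √(expLen T (fun _ => 1) P / expLen T ℓ P) / δ
            * √(relEntropy T P Q / expLen T ℓ P)
        + (A - a) / 2 * ∑' x : intr T, |nodeAvg T ℓ P x - nodeAvg T ℓ Q x| := by
  have hmixed := hP.summable_mass_mul_Hloc hT hcone hℓ hQ hlenP fun x hx => (hAa x hx).2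
  have hl := hP.expLen_pos hT hcone hroot hℓ hlenP
  have hS := hP.expLen_pos hT hcone hroot (fun _ _ => one_pos) hlenSharpP
  have hlocal := abs_entropy_sub_mixedEntropy_le hT hcone hP hQ hlenSharpP hHP hD hmixed hM hδ₀ hδ
  have hnode := abs_mixedEntropy_div_sub_entropy_div_le hT hcone hroot hℓ hP hQ hlenP hlenQ hHQ
    hmixed hAa
  refine (abs_sub_le _ (mixedEntropy T P Q / expLen T ℓ P) _).trans (add_le_add ?_ hnode)
  rw [← sub_div, abs_div, abs_of_pos hl, ← pinsker_const_eq hS.le hl, div_mul_eq_mul_div,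
    ← add_div]
  exact div_le_div_of_nonneg_right hlocal hl.le

end Comparison

/-- Main comparison theorem (Theorem `compare`): under the stated finiteness and uniform
summability assumptions, for every `ε > 0` (with witness `M`) and `0 < δ < 1/2`,
`|H(P)/ℓ(P) − H(Q)/ℓ(Q)| ≤ L·(2ε + M·φ(δ)) + (C·√L/δ)·√(D(P‖Q)/ℓ(P))
  + ((A−a)/2)·‖μ_P − μ_Q‖₁`. -/
theorem main_comparison
    (T : Set (List ℕ)) (hT : IsTree T) (hU : NoUnary T) (hG : NoInfGeo T)
    (hB : (bdry T).Nonempty) (hroot : ([] : List ℕ) ∈ intr T)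
    (ℓ : List ℕ → ℝ) (hℓ : ∀ x ∈ intr T, 0 < ℓ x)
    (P Q : List ℕ → ℝ) (hP : IsProbOn (bdry T) P) (hQ : IsProbOn (bdry T) Q)
    (hlenP : Summable fun v : bdry T => lenWt ℓ v * P v)
    (hlenQ : Summable fun v : bdry T => lenWt ℓ v * Q v)
    (hlenSharpP : Summable fun v : bdry T => ((v : List ℕ).length : ℝ) * P v)
    (hHP : Summable fun v : bdry T => phi (P v))
    (hHQ : Summable fun v : bdry T => phi (Q v))
    (hD : Summable fun v : bdry T => |P v * Real.logb 2 (P v / Q v)|)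
    (A a : ℝ)
    (hA : IsLUB {r : ℝ | ∃ x ∈ intr T, r = Hloc T Q x / ℓ x} A)
    (ha : IsGLB {r : ℝ | ∃ x ∈ intr T, r = Hloc T Q x / ℓ x} a)
    (ε : ℝ) (hε : 0 < ε) (M : ℕ)
    (hM : ∀ x ∈ intr T, ∃ F : Finset (List ℕ), ↑F ⊆ succs T x ∧ F.card ≤ M ∧
      (Summable fun y : {y : List ℕ // y ∈ succs T x ∧ y ∉ F} => phi (fwd T P x y)) ∧
      (∑' y : {y : List ℕ // y ∈ succs T x ∧ y ∉ F}, phi (fwd T P x y)) < ε ∧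
      (Summable fun y : {y : List ℕ // y ∈ succs T x ∧ y ∉ F} => phi (fwd T Q x y)) ∧
      (∑' y : {y : List ℕ // y ∈ succs T x ∧ y ∉ F}, phi (fwd T Q x y)) < ε)
    (δ : ℝ) (hδ0 : 0 < δ) (hδ : δ < 1/2) :
    |(∑' v : bdry T, phi (P v)) / expLen T ℓ P
        - (∑' v : bdry T, phi (Q v)) / expLen T ℓ Q|
      ≤ (expLen T (fun _ => 1) P / expLen T ℓ P) * (2 * ε + M * phi δ)
        + (2 * Real.sqrt 2 / (Real.exp 1 * Real.sqrt (Real.log 2)))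
            * Real.sqrt (expLen T (fun _ => 1) P / expLen T ℓ P) / δ
            * Real.sqrt ((∑' v : bdry T, P v * Real.logb 2 (P v / Q v)) / expLen T ℓ P)
        + (A - a) / 2 * ∑' x : intr T, |nodeAvg T ℓ P x - nodeAvg T ℓ Q x| := by
  have hlenSharpP' : Summable fun v : bdry T => lenWt (fun _ => 1) v * P v := by
    simpa only [lenWt, Finset.sum_const, Finset.card_range, nsmul_one] using hlenSharpP
  exact main_comparison_general hT (fun _ => cone_nonempty hT hG) hroot hℓ hP hQ hlenP hlenQ
    hlenSharpP' hHP hHQ hD.of_abs (fun x hx => ⟨ha.1 ⟨x, hx, rfl⟩, hA.1 ⟨x, hx, rfl⟩⟩) hM hδ0 hδ.le
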